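/- Let E be a real normed vector space, U ⊆ E an open set, and f : E → ℝ a function that is continuously differentiable (C¹) on U. Assume that for every x ∈ U, either f(x) = 0 or the Fréchet derivative of f at x is the zero functional. Then the derivative of f vanishes at every point of U; in particular, if U is moreover preconnected, then f is constant on U. -/

import Mathlib

/-!
The set `{f ≠ a}` is open, and the derivative vanishes on it, so `f` is locally constant there and
each `{f = c}` with `c ≠ a` is open. By continuity these sets are also closed in `U`, so on a
connected open subset `f` is identically `c` as soon as it takes a value `c ≠ a` once. Hence
`{f = a}` is open too, and `f` is locally constant on all of `U`.
-/

open Set Filter Topology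

section Topology

variable {X Y : Type*} [TopologicalSpace X] [TopologicalSpace Y] [T1Space Y]
  {s : Set X} {f : X → Y} {a : Y}

theorem eqOn_const_of_isOpen_inter_preimage_singleton {c : Y} (hs : IsOpen s)
    (hs' : IsPreconnected s) (hf : ContinuousOn f s) (hc : IsOpen (s ∩ f ⁻¹' {c}))
    (hne : (s ∩ f ⁻¹' {c}).Nonempty) : EqOn f (fun _ ↦ c) s := by
  have hcompl : IsOpen (s ∩ f ⁻¹' {c}ᶜ) := hf.isOpen_inter_preimage hs isOpen_compl_singleton
  have hdisj : Disjoint (s ∩ f ⁻¹' {c}) (s ∩ f ⁻¹' {c}ᶜ) :=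
    (disjoint_compl_right.preimage f).mono inter_subset_right inter_subset_right
  have hcover : s ⊆ s ∩ f ⁻¹' {c} ∪ s ∩ f ⁻¹' {c}ᶜ := by
    rw [preimage_compl, inter_union_compl]
  have hsub : s ⊆ s ∩ f ⁻¹' {c} :=
    hs'.subset_left_of_subset_union hc hcompl hdisj hcover (by rwa [← inter_assoc, inter_self])
  exact fun x hx ↦ (hsub hx).2

theorem isOpen_inter_preimage_singleton_of_forall_ne [LocallyConnectedSpace X] (hs : IsOpen s)
    (hf : ContinuousOn f s) (h : ∀ c ≠ a, IsOpen (s ∩ f ⁻¹' {c})) :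
    IsOpen (s ∩ f ⁻¹' {a}) := by
  refine isOpen_iff_mem_nhds.mpr fun x ⟨hxs, hxa⟩ ↦ ?_
  set C := connectedComponentIn s x
  have hCs : C ⊆ s := connectedComponentIn_subset s x
  have hxC : x ∈ C := mem_connectedComponentIn hxs
  have hC : IsOpen C := hs.connectedComponentIn
  refine mem_of_superset (hC.mem_nhds hxC) fun y hyC ↦ ⟨hCs hyC, ?_⟩
  by_contra hya
  have hopen : IsOpen (C ∩ f ⁻¹' {f y}) := by
    simpa only [← inter_assoc, inter_eq_left.mpr hCs] using hC.inter (h (f y) hya)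
  have hconst : EqOn f (fun _ ↦ f y) C :=
    eqOn_const_of_isOpen_inter_preimage_singleton hC isPreconnected_connectedComponentIn
      (hf.mono hCs) hopen ⟨y, hyC, rfl⟩
  exact hya ((hconst hxC).symm.trans hxa)

end Topology

section Calculus

variable {𝕜 E F : Type*} [RCLike 𝕜] [NormedAddCommGroup E] [NormedSpace 𝕜 E]
  [NormedAddCommGroup F] [NormedSpace 𝕜 F] {U : Set E} {f : E → F} {a : F}

theorem isOpen_inter_preimage_singleton_of_hasFDerivAt_zero_of_ne (hU : IsOpen U)
    (hf : ContinuousOn f U) (h : ∀ x ∈ U, f x ≠ a → HasFDerivAt f (0 : E →L[𝕜] F) x) {c : F}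
    (hc : c ≠ a) : IsOpen (U ∩ f ⁻¹' {c}) := by
  let : NormedSpace ℝ E := .restrictScalars ℝ 𝕜 E
  have hV : IsOpen (U ∩ f ⁻¹' {a}ᶜ) := hf.isOpen_inter_preimage hU isOpen_compl_singleton
  have hderiv : ∀ x ∈ U ∩ f ⁻¹' {a}ᶜ, HasFDerivAt f (0 : E →L[𝕜] F) x :=
    fun x hx ↦ h x hx.1 hx.2
  have hopen : IsOpen ((U ∩ f ⁻¹' {a}ᶜ) ∩ f ⁻¹' {c}) :=
    hV.isOpen_inter_preimage_of_fderiv_eq_zero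
      (fun x hx ↦ (hderiv x hx).differentiableAt.differentiableWithinAt)
      (fun x hx ↦ (hderiv x hx).fderiv) {c}
  have hca : ({c} : Set F) ⊆ {a}ᶜ := singleton_subset_iff.mpr hc
  rwa [inter_assoc, ← preimage_inter, inter_eq_right.mpr hca] at hopen

theorem fderiv_eq_zero_of_sq_mul_fderiv_eq_zero_general (hU : IsOpen U) (hf : ContinuousOn f U)
    (h : ∀ x ∈ U, f x = a ∨ HasFDerivAt f (0 : E →L[𝕜] F) x) :
    (∀ x ∈ U, HasFDerivAt f (0 : E →L[𝕜] F) x) ∧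
      (IsPreconnected U → ∀ x ∈ U, ∀ y ∈ U, f x = f y) := by
  let : NormedSpace ℝ E := .restrictScalars ℝ 𝕜 E
  have hopen : IsOpen (U ∩ f ⁻¹' {a}) :=
    isOpen_inter_preimage_singleton_of_forall_ne hU hf fun _ ↦
      isOpen_inter_preimage_singleton_of_hasFDerivAt_zero_of_ne hU hf
        fun x hx hxa ↦ (h x hx).resolve_left hxa
  have hderiv : ∀ x ∈ U, HasFDerivAt f (0 : E →L[𝕜] F) x := by
    intro x hx
    obtain hxa | hx' := h x hx
    · have hev : f =ᶠ[𝓝 x] fun _ ↦ a :=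
        mem_of_superset (hopen.mem_nhds ⟨hx, hxa⟩) inter_subset_right
      exact (hasFDerivAt_const a x).congr_of_eventuallyEq hev
    · exact hx'
  refine ⟨hderiv, fun hU' x hx y hy ↦ ?_⟩
  exact hU.is_const_of_fderiv_eq_zero hU'
    (fun z hz ↦ (hderiv z hz).differentiableAt.differentiableWithinAt)
    (fun z hz ↦ (hderiv z hz).fderiv) hx hy

end Calculus

/-- Let `E` be a real normed space, `U ⊆ E` open, and `f : E → ℝ` be `C¹` on `U`.
If at every point of `U` either `f` vanishes or its Fréchet derivative vanishes, then
the derivative of `f` vanishes at every point of `U`; in particular, if `U` is moreover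
preconnected, then `f` is constant on `U`. -/
theorem fderiv_eq_zero_of_sq_mul_fderiv_eq_zero
    {E : Type*} [NormedAddCommGroup E] [NormedSpace ℝ E]
    (U : Set E) (hU : IsOpen U) (f : E → ℝ)
    (hf : ContDiffOn ℝ 1 f U)
    (h : ∀ x ∈ U, f x = 0 ∨ fderiv ℝ f x = 0) :
    (∀ x ∈ U, fderiv ℝ f x = 0) ∧
      (IsPreconnected U → ∀ x ∈ U, ∀ y ∈ U, f x = f y) := by
  have hd : DifferentiableOn ℝ f U := hf.differentiableOn one_ne_zero
  have h' : ∀ x ∈ U, f x = 0 ∨ HasFDerivAt f (0 : E →L[ℝ] ℝ) x := fun x hx ↦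
    (h x hx).imp_right fun hx' ↦ by
      simpa only [hx'] using (hd.differentiableAt (hU.mem_nhds hx)).hasFDerivAt
  exact (fderiv_eq_zero_of_sq_mul_fderiv_eq_zero_general hU hf.continuousOn h').imp_left
    fun hderiv x hx ↦ (hderiv x hx).fderiv
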